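/- Let f : 𝔻ⁿ → 𝔻 be holomorphic and C²-smooth on the closed polydisc with f(ζ) = 1 at the point ζ = (1,…,1) ∈ 𝕋ⁿ. Then there exist a neighbourhood U of ζ and a constant C > 0 such that for all z ∈ 𝔻ⁿ ∩ U: |f(z) - 1| ≤ C·|∂f/∂z_1(ζ)·(z_1 - 1) + … + ∂f/∂z_n(ζ)·(z_n - 1)|. -/

import Mathlib

open MeasureTheory Metric Set ENNReal

noncomputable section

/-- The open unit polydisc in `ℂⁿ`. -/
def polydisc (n : ℕ) : Set (Fin n → ℂ) := {z | ∀ j, ‖z j‖ < 1}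

/-- The closed unit polydisc in `ℂⁿ`. -/
def closedPolydisc (n : ℕ) : Set (Fin n → ℂ) := {z | ∀ j, ‖z j‖ ≤ 1}

/-- The distinguished boundary (torus) of the polydisc. -/
def torus (n : ℕ) : Set (Fin n → ℂ) := {z | ∀ j, ‖z j‖ = 1}

theorem polydisc_eq_ball (n : ℕ) : polydisc n = ball (0 : Fin n → ℂ) 1 := by
  ext z
  simp [polydisc, pi_norm_lt_iff]

theorem closedPolydisc_eq_ball (n : ℕ) : closedPolydisc n = closedBall (0 : Fin n → ℂ) 1 := by
  ext z
  simp [closedPolydisc, pi_norm_le_iff_of_nonneg]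

theorem clin_smul {n : ℕ} {L : (Fin n → ℂ) →L[ℝ] ℂ}
    (hCL : ∀ v, L (Complex.I • v) = Complex.I * L v) (w : ℂ) (v : Fin n → ℂ) :
    L (w • v) = w * L v := by
  have e : w • v = w.re • v + w.im • (Complex.I • v) := by
    ext j
    simp only [Pi.smul_apply, Pi.add_apply, smul_eq_mul, Complex.real_smul]
    conv_lhs => rw [← Complex.re_add_im w]
    ring
  rw [e, map_add, map_smul, map_smul, hCL]
  conv_rhs => rw [← Complex.re_add_im w]
  simp only [Complex.real_smul]
  ring

theorem clin_sum {n : ℕ} {L : (Fin n → ℂ) →L[ℝ] ℂ}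
    (hCL : ∀ v, L (Complex.I • v) = Complex.I * L v) (v : Fin n → ℂ) :
    L v = ∑ j, L (Pi.single j 1) * v j := by
  have e : v = ∑ j, v j • (Pi.single j (1 : ℂ) : Fin n → ℂ) := by
    ext i
    simp [Finset.sum_apply, Pi.single_apply]
  conv_lhs => rw [e]
  rw [map_sum]
  exact Finset.sum_congr rfl fun j _ => by rw [clin_smul hCL, mul_comm]

theorem slice_differentiable {n : ℕ} {g : (Fin n → ℂ) → ℂ} {K : Set (Fin n → ℂ)}
    {D : (Fin n → ℂ) → (Fin n → ℂ) →L[ℝ] ℂ}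
    (hD : ∀ x ∈ K, HasFDerivWithinAt g (D x) K x)
    (hCL : ∀ x ∈ K, ∀ v, D x (Complex.I • v) = Complex.I * D x v)
    (q v : Fin n → ℂ) (h : ∀ l ∈ closedBall (0 : ℂ) 1, q + l • v ∈ K) :
    DiffContOnCl ℂ (fun l : ℂ => g (q + l • v)) (ball 0 1) := by
  have hmap : MapsTo (fun l : ℂ => q + l • v) (closedBall 0 1) K := h
  refine ⟨?_, ?_⟩
  · intro l hl
    have hx := h l (ball_subset_closedBall hl)
    set x := q + l • v with hxdef
    have h1 : HasFDerivAt (𝕜 := ℝ) (fun l : ℂ => q + l • v)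
        ((ContinuousLinearMap.id ℝ ℂ).smulRight v) l := by
      have := ((hasFDerivAt_id (𝕜 := ℝ) l).smul_const v).const_add q
      exact this
    have h2 : HasFDerivAt (𝕜 := ℝ) (fun l : ℂ => g (q + l • v))
        ((D x).comp ((ContinuousLinearMap.id ℝ ℂ).smulRight v)) l := by
      have h3 := (hD x hx).comp l (h1.hasFDerivWithinAt (s := closedBall 0 1)) hmap
      exact h3.hasFDerivAt (Filter.mem_of_superset (isOpen_ball.mem_nhds hl) ball_subset_closedBall)
    have h4 : HasFDerivAt (𝕜 := ℂ) (fun l : ℂ => g (q + l • v))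
        ((ContinuousLinearMap.id ℂ ℂ).smulRight (D x v)) l := by
      refine hasFDerivAt_of_restrictScalars ℝ h2 ?_
      ext w
      simp [clin_smul (hCL x hx)]
    exact h4.differentiableAt.differentiableWithinAt
  · rw [closure_ball _ one_ne_zero]
    intro l hl
    have := (hD _ (h l hl)).continuousWithinAt
    refine this.comp (f := fun l : ℂ => q + l • v) ?_ hmap
    exact (by fun_prop : Continuous (fun l : ℂ => q + l • v)).continuousWithinAt

theorem max_mod_one {φ : ℂ → ℂ} (h : DiffContOnCl ℂ φ (ball 0 1))
    (hb : ∀ l ∈ ball (0 : ℂ) 1, ‖φ l‖ ≤ ‖φ 0‖) : ∀ l ∈ closedBall (0 : ℂ) 1, φ l = φ 0 := by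
  intro l hl
  exact Complex.eqOn_closedBall_of_isMaxOn_norm h (fun x hx => hb x hx) hl

theorem real_const {φ : ℂ → ℂ} (h : DiffContOnCl ℂ φ (ball 0 1))
    (hr : ∀ l ∈ closedBall (0 : ℂ) 1, (φ l).im = 0) :
    φ 1 = φ 0 := by
  have hne : ∀ l ∈ closedBall (0 : ℂ) 1, φ l + Complex.I ≠ 0 := by
    intro l hl h0
    have := congrArg Complex.im h0
    simp [hr l hl] at this
  have hn : ∀ l ∈ closedBall (0 : ℂ) 1, ‖(φ l - Complex.I) * (φ l + Complex.I)⁻¹‖ = 1 := by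
    intro l hl
    have h1 : ‖φ l - Complex.I‖ = ‖φ l + Complex.I‖ := by
      rw [Complex.norm_def, Complex.norm_def]
      simp [Complex.normSq_apply, hr l hl]
    rw [norm_mul, norm_inv, h1]
    exact mul_inv_cancel₀ (norm_ne_zero_iff.2 (hne l hl))
  have hd : DiffContOnCl ℂ (fun l => (φ l - Complex.I) * (φ l + Complex.I)⁻¹) (ball 0 1) := by
    refine (h.sub_const _).smul ((h.add_const _).inv ?_)
    rw [closure_ball _ one_ne_zero]
    exact hne
  have h0 : (0 : ℂ) ∈ closedBall (0 : ℂ) 1 := by simp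
  have h1 : (1 : ℂ) ∈ closedBall (0 : ℂ) 1 := by simp
  have := max_mod_one hd (fun l hl => by
    rw [hn l (ball_subset_closedBall hl), hn 0 h0]) 1 h1
  have e1 := hne 1 h1
  have e0 := hne 0 h0
  simp only [← div_eq_mul_inv] at this
  rw [div_eq_div_iff e1 e0] at this
  have h2 : 2 * Complex.I * (φ 1 - φ 0) = 0 := by linear_combination this
  have : φ 1 - φ 0 = 0 := by simpa using h2
  exact sub_eq_zero.1 this

theorem hopf_aux {φ : ℂ → ℂ} (h : DifferentiableOn ℂ φ (ball 0 1))
    (hb : ∀ l ∈ ball (0 : ℂ) 1, ‖φ l‖ ≤ 1) (h0 : φ 0 ≠ 1) (r : ℝ) (hr0 : 0 ≤ r) (hr : r < 1) :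
    (1 - r) * ‖1 - φ 0‖ ≤ 2 * ‖1 - φ r‖ := by
  have hre : ∀ l ∈ ball (0 : ℂ) 1, 0 ≤ (1 - φ l).re := by
    intro l hl
    have := (Complex.re_le_norm (φ l)).trans (hb l hl)
    simpa using this
  set c := 1 - φ 0 with hc
  have hm0 : (0 : ℂ) ∈ ball (0 : ℂ) 1 := by simp
  have hcre : 0 < c.re := by
    have hb0 := hb 0 hm0
    refine lt_of_le_of_ne (hre 0 hm0) fun hh => h0 ?_
    have hre1 : (φ 0).re = 1 := by
      have : c.re = 1 - (φ 0).re := by simp [hc]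
      linarith
    have h1 : ‖φ 0‖ ^ 2 ≤ 1 := by nlinarith [norm_nonneg (φ 0)]
    rw [← Complex.normSq_eq_norm_sq, Complex.normSq_apply, hre1] at h1
    have him : (φ 0).im = 0 := by nlinarith
    apply Complex.ext <;> simp [hre1, him]
  have hne : ∀ l ∈ ball (0 : ℂ) 1, (1 - φ l) + (starRingEnd ℂ) c ≠ 0 := by
    intro l hl hh
    have := congrArg Complex.re hh
    have h2 := hre l hl
    simp only [Complex.add_re, Complex.conj_re, Complex.zero_re] at this
    linarith
  have hle : ∀ l ∈ ball (0 : ℂ) 1, ‖(1 - φ l) - c‖ ≤ ‖(1 - φ l) + (starRingEnd ℂ) c‖ := by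
    intro l hl
    have h2 := hre l hl
    generalize 1 - φ l = w at h2
    rw [Complex.norm_def, Complex.norm_def]
    apply Real.sqrt_le_sqrt
    simp only [Complex.normSq_apply, Complex.sub_re, Complex.sub_im, Complex.add_re, Complex.add_im,
      Complex.conj_re, Complex.conj_im]
    nlinarith [mul_nonneg h2 hcre.le]
  have hS := Complex.norm_le_norm_of_mapsTo_ball (R := 1) (z := (r : ℂ))
    (f := fun l => ((1 - φ l) - c) / ((1 - φ l) + (starRingEnd ℂ) c)) ?_ ?_ ?_ ?_
  · have hrm : (r : ℂ) ∈ ball (0 : ℂ) 1 := by simpa [abs_of_nonneg hr0] using hr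
    have hp := norm_pos_iff.2 (hne r hrm)
    rw [norm_div, div_le_iff₀ hp, Complex.norm_real, Real.norm_of_nonneg hr0] at hS
    have h3 := norm_sub_norm_le c (1 - φ r)
    rw [norm_sub_rev c] at h3
    have h4 := norm_add_le (1 - φ r) ((starRingEnd ℂ) c)
    rw [Complex.norm_conj] at h4
    nlinarith [norm_nonneg (1 - φ r)]
  · exact DifferentiableOn.div ((h.const_sub 1).sub_const c) ((h.const_sub 1).add_const _) hne
  · intro l hl
    simp only [mem_closedBall_zero_iff, norm_div]
    exact div_le_one_of_le₀ (hle l hl) (norm_nonneg _)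
  · simp [hc]
  · simpa [abs_of_nonneg hr0] using hr

theorem hopf {φ : ℂ → ℂ} (h : DifferentiableOn ℂ φ (ball 0 1))
    (hb : ∀ l ∈ ball (0 : ℂ) 1, ‖φ l‖ ≤ 1) (h1 : φ 1 = 1)
    (hd : HasFDerivWithinAt φ (0 : ℂ →L[ℝ] ℂ) (closedBall 0 1) 1) : φ 0 = 1 := by
  by_contra h0
  have hc : 0 < ‖1 - φ 0‖ := norm_pos_iff.2 (sub_ne_zero.2 (Ne.symm h0))
  have ho := hd.isLittleO
  have ho' := ho.def (c := ‖1 - φ 0‖ / 4) (by positivity)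
  rw [Filter.Eventually, Metric.mem_nhdsWithin_iff] at ho'
  obtain ⟨ε, hε, hsub⟩ := ho'
  obtain ⟨r, hr0, hr1, hr2⟩ : ∃ r : ℝ, 0 ≤ r ∧ r < 1 ∧ 1 - r < ε := by
    refine ⟨max 0 (1 - ε / 2), le_max_left _ _, max_lt one_pos (by linarith), ?_⟩
    have := le_max_right 0 (1 - ε / 2)
    linarith
  have hnr : ‖(r : ℂ) - 1‖ = 1 - r := by
    rw [← Complex.ofReal_one, ← Complex.ofReal_sub, Complex.norm_real, Real.norm_eq_abs,
      abs_sub_comm, abs_of_pos (by linarith)]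
  have hr := hsub (a := (r : ℂ)) ⟨by rw [mem_ball, dist_eq_norm, hnr]; exact hr2, by
    simpa [abs_of_nonneg hr0] using hr1.le⟩
  simp only [mem_ofPred_eq, h1, zero_apply, sub_zero, hnr] at hr
  have := hopf_aux h hb h0 r hr0 hr1
  rw [norm_sub_rev] at hr
  nlinarith

theorem coord_nonneg {n : ℕ} {f : (Fin n → ℂ) → ℂ} {x : Fin n → ℂ}
    (hx : x ∈ closedPolydisc n) {L : (Fin n → ℂ) →L[ℝ] ℂ}
    (hD : HasFDerivWithinAt f L (closedPolydisc n) x)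
    (hCL : ∀ v, L (Complex.I • v) = Complex.I * L v)
    (hb : ∀ y ∈ closedPolydisc n, ‖f y‖ ≤ 1) (hfx : f x = 1) (i : Fin n) (hi : x i = 1) :
    ‖L (Pi.single i 1)‖ ≤ (L (Pi.single i 1)).re := by
  set a := L (Pi.single i 1) with ha
  by_cases h0 : a = 0
  · simp [h0]
  have hna : ‖a‖ ≠ 0 := norm_ne_zero_iff.2 h0
  have hlin : ∀ w : ℂ, L (Pi.single i w) = w * a := by
    intro w
    have e : (Pi.single i w : Fin n → ℂ) = w • (Pi.single i (1:ℂ) : Fin n → ℂ) := by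
      rw [← Pi.single_smul]; simp
    rw [e, clin_smul hCL]
  set u : ℂ := (starRingEnd ℂ) a / ‖a‖ with hu
  have hnu : ‖u‖ = 1 := by simp [hu, hna]
  have hconv : Convex ℝ (closedPolydisc n) := by
    rw [closedPolydisc_eq_ball]; exact convex_closedBall _ _
  have hy : x + Pi.single i (u - 1) ∈ closedPolydisc n := by
    intro j
    by_cases hj : j = i
    · subst hj; simp [hi, hnu]
    · simpa [hj] using hx j
  have hmax : IsLocalMaxOn (fun y => (f y).re) (closedPolydisc n) x := by
    refine IsMaxOn.localize fun y hy => ?_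
    simp only [mem_ofPred_eq, hfx, Complex.one_re]
    exact (Complex.re_le_norm _).trans (hb y hy)
  have hre : HasFDerivWithinAt (fun y => (f y).re) (Complex.reCLM.comp L) (closedPolydisc n) x :=
    Complex.reCLM.hasFDerivAt.comp_hasFDerivWithinAt x hD
  have := hmax.hasFDerivWithinAt_nonpos hre
    (mem_posTangentConeAt_of_segment_subset (hconv.segment_subset hx hy))
  simp only [ContinuousLinearMap.comp_apply, hlin, Complex.reCLM_apply] at this
  have hua : u * a = ‖a‖ := by
    have : (starRingEnd ℂ) a * a = (‖a‖ : ℂ) ^ 2 := by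
      rw [mul_comm, Complex.mul_conj, Complex.normSq_eq_norm_sq]; norm_cast
    rw [hu, div_mul_eq_mul_div, this, pow_two, mul_div_assoc, div_self (by exact_mod_cast hna),
      mul_one]
  rw [sub_mul, hua, one_mul] at this
  simpa using this

theorem julia_caratheodory_linearization (n : ℕ) (f : (Fin n → ℂ) → ℂ)
    (hhol : DifferentiableOn ℂ f (polydisc n))
    (hsm : ContDiffOn ℝ 2 f (closedPolydisc n))
    (hmap : ∀ z ∈ polydisc n, ‖f z‖ < 1)
    (hfζ : f (fun _ => 1) = 1) :
    ∃ U ∈ nhds (fun _ => (1:ℂ)), ∃ C > (0:ℝ), ∀ z ∈ polydisc n ∩ U,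
      ‖f z - 1‖ ≤ C * ‖∑ j : Fin n,
        fderivWithin ℝ f (closedPolydisc n) (fun _ => 1) (Pi.single j 1) * (z j - 1)‖ := by
  set K := closedPolydisc n with hK
  set D := fderivWithin ℝ f K with hDdef
  have hopen : IsOpen (polydisc n) := by rw [polydisc_eq_ball]; exact isOpen_ball
  have hPK : polydisc n ⊆ K := by
    rw [hK, polydisc_eq_ball, closedPolydisc_eq_ball]; exact ball_subset_closedBall
  have hKcl : K ⊆ closure (polydisc n) := by
    rw [hK, polydisc_eq_ball, closedPolydisc_eq_ball, closure_ball _ one_ne_zero]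
  have hPint : polydisc n ⊆ interior K := interior_maximal hPK hopen
  have hKci : K ⊆ closure (interior K) := hKcl.trans (closure_mono hPint)
  have hconv : Convex ℝ K := by
    rw [hK, closedPolydisc_eq_ball]; exact convex_closedBall _ _
  have huniq : UniqueDiffOn ℝ K :=
    uniqueDiffOn_convex hconv ⟨0, hPint (by intro j; simp)⟩
  have hD : ∀ x ∈ K, HasFDerivWithinAt f (D x) K x := fun x hx =>
    ((hsm.differentiableOn (by norm_num)) x hx).hasFDerivWithinAt
  have hDC : ContDiffOn ℝ 1 D K := hsm.fderivWithin huniq (by norm_num)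
  have hb : ∀ y ∈ K, ‖f y‖ ≤ 1 := by
    intro y hy
    have hcont : ContinuousWithinAt f (polydisc n) y := (hsm.continuousOn y hy).mono hPK
    have hmem := hcont.mem_closure_image (hKcl hy)
    have : closure (f '' polydisc n) ⊆ closedBall 0 1 := by
      refine closure_minimal ?_ isClosed_closedBall
      rintro _ ⟨w, hw, rfl⟩
      simpa using (hmap w hw).le
    simpa using this hmem
  have hCL : ∀ x ∈ K, ∀ v, D x (Complex.I • v) = Complex.I * D x v := by
    intro x hx v
    have h1 : EqOn (fun x => D x (Complex.I • v)) (fun x => Complex.I * D x v) (polydisc n) := by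
      intro y hy
      have hy' := (hhol.differentiableAt (hopen.mem_nhds hy)).hasFDerivAt.restrictScalars ℝ
      have : D y = (fderiv ℂ f y).restrictScalars ℝ :=
        hy'.hasFDerivWithinAt.fderivWithin (huniq y (hPK hy))
      simp [this]
    have h2 : ∀ w, ContinuousOn (fun x => D x w) K := fun w =>
      hDC.continuousOn.clm_apply continuousOn_const
    exact h1.of_subset_closure (h2 _) (continuousOn_const.mul (h2 _)) hPK hKcl hx
  have hD2 : ∀ e, ∀ x ∈ K, HasFDerivWithinAt (fun y => D y e) ((fderivWithin ℝ D K x).flip e) K x := by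
    intro e x hx
    have h1 := ((hDC.differentiableOn (by norm_num)) x hx).hasFDerivWithinAt
    have h2 := (ContinuousLinearMap.apply ℝ ℂ e).hasFDerivAt.comp_hasFDerivWithinAt x h1
    exact h2
  have hCL2 : ∀ e, ∀ x ∈ K, ∀ v, (fderivWithin ℝ D K x).flip e (Complex.I • v) =
      Complex.I * (fderivWithin ℝ D K x).flip e v := by
    intro e x hx v
    have hsymm : IsSymmSndFDerivWithinAt ℝ f K x :=
      (hsm x hx).isSymmSndFDerivWithinAt (by simp) huniq (hKci hx) hx
    have h1 : (fderivWithin ℝ D K x) (Complex.I • v) e =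
      (fderivWithin ℝ D K x) e (Complex.I • v) := hsymm _ _
    have h2 : (fderivWithin ℝ D K x) v e = (fderivWithin ℝ D K x) e v := hsymm _ _
    have h3 := hD2 (Complex.I • v) x hx
    have h4 := (hD2 v x hx).const_mul Complex.I
    have h5 := h3.congr (fun y hy => (hCL y hy v).symm) (hCL x hx v).symm
    have h6 := (huniq x hx).eq h4 h5
    have h7 := DFunLike.congr_fun h6 e
    simp only [ContinuousLinearMap.flip_apply, h1, h2]
    simpa using h7.symm
  set ζ : Fin n → ℂ := fun _ => 1 with hζ
  have hζK : ζ ∈ K := by intro j; simp [hζ]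
  set a : Fin n → ℂ := fun j => D ζ (Pi.single j 1) with ha
  classical
  set q : Fin n → ℂ := fun j => if a j = 0 then 0 else 1 with hq
  set P : (Fin n → ℂ) → (Fin n → ℂ) := fun z j => if a j = 0 then z j else 0 with hP
  have hqP : ∀ z ∈ K, ∀ l ∈ closedBall (0 : ℂ) 1, q + l • P z ∈ K := by
    intro z hz l hl j
    have hl' : ‖l‖ ≤ 1 := by simpa using hl
    by_cases hj : a j = 0
    · simp only [hq, hP, hj, Pi.add_apply, Pi.smul_apply, if_true, zero_add, smul_eq_mul, norm_mul]
      exact mul_le_one₀ hl' (norm_nonneg _) (hz j)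
    · simp [hq, hP, hj]
  have hqζ : q + (1 : ℂ) • P ζ = ζ := by
    ext j
    by_cases hj : a j = 0 <;> simp [hq, hP, hj, hζ]
  have hone : (1 : ℂ) ∈ closedBall (0 : ℂ) 1 := by simp
  have hzero : (0 : ℂ) ∈ closedBall (0 : ℂ) 1 := by simp
  have hfq : f q = 1 := by
    have hs := slice_differentiable hD hCL q (P ζ) (hqP ζ hζK)
    have h1 : HasFDerivAt (𝕜 := ℝ) (fun l : ℂ => q + l • P ζ)
        ((ContinuousLinearMap.id ℝ ℂ).smulRight (P ζ)) 1 :=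
      ((hasFDerivAt_id (𝕜 := ℝ) (1 : ℂ)).smul_const (P ζ)).const_add q
    have h2 : HasFDerivWithinAt f (D ζ) K (q + (1 : ℂ) • P ζ) := by
      rw [hqζ]; exact hD ζ hζK
    have h3 := h2.comp (1 : ℂ) (h1.hasFDerivWithinAt (s := closedBall 0 1)) (hqP ζ hζK)
    have h4 : (D ζ).comp ((ContinuousLinearMap.id ℝ ℂ).smulRight (P ζ)) = 0 := by
      ext w
      have : D ζ (P ζ) = 0 := by
        rw [clin_sum (hCL ζ hζK)]
        refine Finset.sum_eq_zero fun j _ => ?_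
        by_cases hj : a j = 0
        · have : D ζ (Pi.single j 1) = 0 := hj
          rw [this, zero_mul]
        · simp [hP, hj]
      simp [clin_smul (hCL ζ hζK), this]
    rw [h4] at h3
    have := hopf hs.differentiableOn
      (fun l hl => hb _ (hqP ζ hζK l (ball_subset_closedBall hl))) (by simp only [hqζ, hfζ]) h3
    simpa using this
  have hface : ∀ z ∈ K, ∀ l ∈ closedBall (0 : ℂ) 1, f (q + l • P z) = 1 := by
    intro z hz l hl
    have hs := slice_differentiable hD hCL q (P z) (hqP z hz)
    have := max_mod_one hs (fun l hl => by
      simp only [zero_smul, add_zero, hfq, norm_one]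
      exact hb _ (hqP z hz l (ball_subset_closedBall hl))) l hl
    simpa [hfq] using this
  have hconst : ∀ z ∈ K, ∀ i, a i ≠ 0 → D (q + (1 : ℂ) • P z) (Pi.single i 1) =
      D q (Pi.single i 1) := by
    intro z hz i hi
    have hs := slice_differentiable (hD2 (Pi.single i 1)) (hCL2 (Pi.single i 1)) q (P z) (hqP z hz)
    have := real_const hs (fun l hl => by
      have hx := hqP z hz l hl
      have h1 := coord_nonneg hx (hD _ hx) (hCL _ hx) hb (hface z hz l hl) i
        (by simp [hq, hP, hi])
      exact Complex.abs_re_eq_norm.1 (le_antisymm (Complex.abs_re_le_norm _)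
        (h1.trans (le_abs_self _))))
    simpa using this
  have hDa : ∀ z ∈ K, ∀ i, a i ≠ 0 → D (q + P z) (Pi.single i 1) = a i := by
    intro z hz i hi
    have h1 := hconst z hz i hi
    have h2 := hconst ζ hζK i hi
    rw [hqζ] at h2
    rw [one_smul] at h1
    rw [h1, ← h2]
  have hapos : ∀ i, ‖a i‖ ≤ (a i).re := fun i =>
    coord_nonneg hζK (hD _ hζK) (hCL _ hζK) hb hfζ i rfl
  have hare : ∀ i, a i = ((‖a i‖ : ℝ) : ℂ) := by
    intro i
    have h1 : |(a i).re| = ‖a i‖ := le_antisymm (Complex.abs_re_le_norm _)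
        ((hapos i).trans (le_abs_self _))
    have him := Complex.abs_re_eq_norm.1 h1
    have hre : (a i).re = ‖a i‖ := le_antisymm (Complex.re_le_norm _) (hapos i)
    apply Complex.ext <;> simp [him, hre]
  obtain ⟨M, t, ht, hLip⟩ := (hDC ζ hζK).exists_lipschitzOnWith hconv
  rw [Metric.mem_nhdsWithin_iff] at ht
  obtain ⟨ε, hε, hsub⟩ := ht
  set B : ℝ := ∑ j, 2 * ‖a j‖⁻¹ with hB
  have hB0 : 0 ≤ B := Finset.sum_nonneg fun j _ => by positivity
  refine ⟨ball ζ ε, ball_mem_nhds _ hε, 1 + M * B, by positivity, ?_⟩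
  rintro z ⟨hz, hzε⟩
  have hzK := hPK hz
  set S := ∑ j, D ζ (Pi.single j 1) * (z j - 1) with hS
  set p := q + P z with hp
  have hpK : p ∈ K := by simpa using hqP z hzK 1 hone
  have hfp : f p = 1 := by simpa using hface z hzK 1 hone
  have hpε : p ∈ ball ζ ε := by
    rw [mem_ball, dist_pi_lt_iff hε]
    intro j
    have := (dist_pi_lt_iff hε).1 hzε j
    by_cases hj : a j = 0
    · simpa [hp, hq, hP, hj] using this
    · simpa [hp, hq, hP, hj, hζ] using hε
  have hDS : D p (z - p) = S := by
    rw [clin_sum (hCL p hpK), hS]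
    refine Finset.sum_congr rfl fun j _ => ?_
    by_cases hj : a j = 0
    · have h0 : D ζ (Pi.single j 1) = 0 := hj
      simp [hp, hq, hP, hj, h0]
    · have e : (z - p) j = z j - 1 := by simp [hp, hq, hP, hj]
      rw [hDa z hzK j hj, e]
  have hseg : segment ℝ p z ⊆ K ∩ ball ζ ε := fun y hy =>
    ⟨hconv.segment_subset hpK hzK hy, (convex_ball ζ ε).segment_subset hpε hzε hy⟩
  have htay : ‖f z - f p - D p (z - p)‖ ≤ M * ‖z - p‖ * ‖z - p‖ := by
    refine Convex.norm_image_sub_le_of_norm_hasFDerivWithin_le' (s := segment ℝ p z)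
      (fun y hy => (hD y (hseg hy).1).mono (fun w hw => (hseg hw).1)) ?_ (convex_segment _ _)
      (left_mem_segment _ _ _) (right_mem_segment _ _ _)
    intro y hy
    have h1 := hLip.dist_le_mul y (hsub ⟨(hseg hy).2, (hseg hy).1⟩) p (hsub ⟨hpε, hpK⟩)
    rw [dist_eq_norm, dist_eq_norm] at h1
    refine h1.trans (mul_le_mul_of_nonneg_left ?_ M.2)
    exact norm_sub_le_of_mem_segment hy
  rw [hDS, hfp] at htay
  -- lower bound for S
  have hterm : ∀ j, ‖a j‖ * (‖z j - 1‖ ^ 2 / 2) ≤ ‖S‖ := by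
    intro j
    have hnn : ∀ i, ‖a i‖ * (‖z i - 1‖ ^ 2 / 2) ≤ (-(a i * (z i - 1))).re := by
      intro i
      have hzi : ‖z i‖ ^ 2 ≤ 1 := by nlinarith [norm_nonneg (z i), hz i]
      have : ‖z i - 1‖ ^ 2 / 2 ≤ 1 - (z i).re := by
        rw [← Complex.normSq_eq_norm_sq, Complex.normSq_apply] at hzi ⊢
        simp only [Complex.sub_re, Complex.sub_im, Complex.one_re, Complex.one_im]
        nlinarith
      rw [hare i]
      simp only [Complex.norm_real, norm_norm, Complex.neg_re, Complex.re_ofReal_mul,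
        Complex.sub_re, Complex.one_re]
      nlinarith [norm_nonneg (a i)]
    calc ‖a j‖ * (‖z j - 1‖ ^ 2 / 2) ≤ ∑ i, ‖a i‖ * (‖z i - 1‖ ^ 2 / 2) :=
          Finset.single_le_sum (f := fun i => ‖a i‖ * (‖z i - 1‖ ^ 2 / 2))
            (fun i _ => by positivity) (Finset.mem_univ j)
      _ ≤ ∑ i, (-(a i * (z i - 1))).re := Finset.sum_le_sum fun i _ => hnn i
      _ = (-S).re := by
          rw [← Complex.re_sum, Finset.sum_neg_distrib]
      _ ≤ ‖S‖ := by
          have := Complex.re_le_norm (-S)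
          rwa [norm_neg] at this
  have hzp : ‖z - p‖ ^ 2 ≤ B * ‖S‖ := by
    have hBS : 0 ≤ B * ‖S‖ := by positivity
    rw [← Real.le_sqrt (norm_nonneg _) hBS, pi_norm_le_iff_of_nonneg (Real.sqrt_nonneg _)]
    intro j
    rw [Real.le_sqrt (norm_nonneg _) hBS]
    by_cases hj : a j = 0
    · simpa [hp, hq, hP, hj] using hBS
    · have hap : 0 < ‖a j‖ := norm_pos_iff.2 hj
      have e : (z - p) j = z j - 1 := by simp [hp, hq, hP, hj]
      rw [e]
      have h1 : 2 * ‖a j‖⁻¹ ≤ B :=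
        Finset.single_le_sum (f := fun j => 2 * ‖a j‖⁻¹) (fun i _ => by positivity)
          (Finset.mem_univ j)
      refine le_trans ?_ (mul_le_mul_of_nonneg_right h1 (norm_nonneg S))
      have h2 := hterm j
      have h3 := mul_le_mul_of_nonneg_left h2 (by positivity : 0 ≤ 2 * ‖a j‖⁻¹)
      refine le_trans (le_of_eq ?_) h3
      field_simp
  have hfin : ‖f z - 1‖ ≤ ‖f z - 1 - S‖ + ‖S‖ := by
    have := norm_add_le (f z - 1 - S) S
    simpa using this
  have hM : (0 : ℝ) ≤ M := M.2
  nlinarith [mul_le_mul_of_nonneg_left hzp hM]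

end
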